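/- Let l, m, n be natural numbers with m > 0 and let α ≤ ω_m be an ordinal such that (F_{ω_m+α})^[l](n) ≤ F_{ε₀}(m), where (·)^[l] denotes the l-fold iterate. Then (F^⋄_{ε₀+α})^[l](n) ≤ (F_{ω_m+α})^[l](n). -/

import Mathlib

/-!
The two hierarchies obey the same recursion in `α`: since `α ≤ ω_m`, the sum `ω_m + α` has no
absorption, so `{ω_m + α}(n) = ω_m + {α}(n)` for `α ≠ 0` (`fundSeq_add`). It is therefore enough
to compare them at `α = 0`, where `F^⋄_{ε₀}(n) = F_{ω_{k+1}}(n)` with `k = F_{ε₀}⁻¹(n)` has to be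
bounded by `F_{ω_m}(n)`. The hypothesis gives `n < F_{ω_m}(n) ≤ F_{ε₀}(m)`, so `k < m` because
`F_{ε₀}` is monotone (`Feps0Inv_lt`), and `F_{ω_{k+1}}(n) ≤ F_{ω_m}(n)` because `ω_m` steps down to
`ω_{k+1}` (`stepDown_tower_of_le`). At successors, and for the final iteration, a bound valid below
a threshold is carried through iterates of a monotone function (`iterate_le_of_le_below`).

The needed monotonicity is the classical one below `ε₀`. If `α` steps down to `β` with parameter
`n`, then `F_β(n) ≤ F_α(n)` (`fgh_le_of_stepDown`). Each `F_α` is monotone because `{α}(x + 1)`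
steps down to `{α}(x)` with every parameter (`stepDown_fundSeq_succ`), which in turn follows from
the compatibility of stepping down with sums and with exponentiation to base `ω`
(`stepDown.add`, `stepDown.opow`).
-/

open Ordinal
open scoped Classical

noncomputable section

/-- `omegaTower m α` is `ω_m^α`: the `m`-fold iterated `ω`-power tower on top of `α`. -/
noncomputable def omegaTower : ℕ → Ordinal.{0} → Ordinal.{0}
  | 0, α => α
  | m + 1, α => omega0 ^ (omegaTower m α)

/-- `ε₀`, the least ordinal `ε` with `ω ^ ε = ε`. -/
noncomputable def eps0 : Ordinal.{0} := Ordinal.nfp (fun a => omega0 ^ a) 0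

/-- The fundamental sequence `{α}(n)` for ordinals below `ε₀`:
`{0}(n) = 0`, `{β+1}(n) = β`, and for a limit `α = β + ω^γ·(k+1)` (with `γ > 0` the least
exponent of the Cantor normal form) we set `{α}(n) = β + ω^γ·k + ω^δ·(n+1)` if `γ = δ+1`
and `{α}(n) = β + ω^γ·k + ω^{{γ}(n)}` if `γ` is a limit.  Here `γ` is recovered as the
largest exponent with `ω^γ ∣ α`, and `β + ω^γ·k = ω^γ · pred (α / ω^γ)`. -/
noncomputable def fundSeq (α : Ordinal.{0}) (n : ℕ) : Ordinal.{0} :=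
  if _h0 : α = 0 then 0
  else if hs : ∃ β, α = β + 1 then Classical.choose hs
  else
    let γ : Ordinal := sSup {c : Ordinal | omega0 ^ c ∣ α}
    if hγ : ∃ δ, γ = δ + 1 then
      omega0 ^ γ * Ordinal.pred (α / omega0 ^ γ) +
        omega0 ^ (Classical.choose hγ) * ((n : Ordinal) + 1)
    else if hlt : γ < α then
      omega0 ^ γ * Ordinal.pred (α / omega0 ^ γ) + omega0 ^ (fundSeq γ n)
    else 0
termination_by α
decreasing_by exact hlt

/-- The step-down relation `β →_n γ`: there is a finite sequence from `β` to `γ`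
each step of which descends to the `n`-th member of the fundamental sequence. -/
def stepDown (n : ℕ) (β γ : Ordinal.{0}) : Prop :=
  Relation.ReflTransGen (fun a b => fundSeq a n = b) β γ

/-- The fast-growing hierarchy `F_α` for `α < ε₀`:
`F_0(x) = x+1`, `F_{α+1}(x) = F_α^[x+1](x)`, `F_λ(x) = F_{{λ}(x)}(x)` for limits. -/
noncomputable def fgh (α : Ordinal.{0}) : ℕ → ℕ :=
  if _h0 : α = 0 then fun x => x + 1
  else if hs : ∃ β, α = β + 1 then fun x => (fgh (Classical.choose hs))^[x + 1] x
  else fun x => if hlt : fundSeq α x < α then fgh (fundSeq α x) x else 0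
termination_by α
decreasing_by
  · calc Classical.choose hs < Classical.choose hs + 1 := by
          rw [Ordinal.add_one_eq_succ]; exact Order.lt_succ _
      _ = α := (Classical.choose_spec hs).symm
  · exact hlt

/-- `F_{ε₀}(x) := F_{ω_{x+1}}(x)`. -/
noncomputable def Feps0 (x : ℕ) : ℕ := fgh (omegaTower (x + 1) 1) x

/-- The inverse `F_{ε₀}^{-1}(x) := max({z ≤ x : F_{ε₀}(z) ≤ x} ∪ {0})`. -/
noncomputable def Feps0Inv (x : ℕ) : ℕ :=
  sSup ({z : ℕ | z ≤ x ∧ Feps0 z ≤ x} ∪ {0})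

/-- The slow function `F^⋄_{ε₀}(x) := F_{ω_{F_{ε₀}^{-1}(x)+1}}(x)`. -/
noncomputable def slowFeps0 (x : ℕ) : ℕ := fgh (omegaTower (Feps0Inv x + 1) 1) x

/-- The slow hierarchy `F^⋄_{ε₀+α}` for `α < ε₀`:
`F^⋄_{ε₀+0} = F^⋄_{ε₀}`, `F^⋄_{ε₀+α+1}(n) = (F^⋄_{ε₀+α})^[n+1](n)`, and
`F^⋄_{ε₀+λ}(n) = F^⋄_{ε₀+{λ}(n)}(n)` for limits `λ`. -/
noncomputable def slowF (α : Ordinal.{0}) : ℕ → ℕ :=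
  if _h0 : α = 0 then slowFeps0
  else if hs : ∃ β, α = β + 1 then fun n => (slowF (Classical.choose hs))^[n + 1] n
  else fun n => if hlt : fundSeq α n < α then slowF (fundSeq α n) n else 0
termination_by α
decreasing_by
  · calc Classical.choose hs < Classical.choose hs + 1 := by
          rw [Ordinal.add_one_eq_succ]; exact Order.lt_succ _
      _ = α := (Classical.choose_spec hs).symm
  · exact hlt

/-- A nonempty finite set of naturals is *large* if its cardinality is at least
its minimum. -/
def IsLargeSet (Y : Finset ℕ) : Prop := ∃ hY : Y.Nonempty, Y.min' hY ≤ Y.card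

/-- The Paris–Harrington statement `PH(k, m, n, N)`: every `k`-colouring of the
`n`-element subsets of `{0, …, N-1}` admits a large homogeneous set with at least
`m` elements. -/
def PH (k m n N : ℕ) : Prop :=
  ∀ f : Finset ℕ → Fin k,
    ∃ Y : Finset ℕ, Y ⊆ Finset.range N ∧ m ≤ Y.card ∧ IsLargeSet Y ∧
      ∀ s t : Finset ℕ, s ⊆ Y → t ⊆ Y → s.card = n → t.card = n → f s = f t

/-- `σ(n, k)`: the least `N` such that every `k`-colouring of the `n`-element subsets of
`{0, …, N-1}` admits a large homogeneous set with at least `n+1` elements. -/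
noncomputable def sigmaPH (n k : ℕ) : ℕ := sInf {N | PH k (n + 1) n N}

/-! ### Fundamental sequences -/

/-- Every nonzero ordinal is `ω ^ γ * (ξ + 1)`, where `γ` is the least exponent of its Cantor
normal form. -/
theorem exists_nf (α : Ordinal.{0}) (h : α ≠ 0) : ∃ γ ξ : Ordinal.{0}, α = ω ^ γ * (ξ + 1) := by
  induction α using WellFoundedLT.induction with
  | ind α ih =>
  have hpos : ω ^ log ω α ≠ 0 := opow_ne_zero _ omega0_ne_zero
  have hd := div_add_mod α (ω ^ log ω α)
  by_cases hm : α % ω ^ log ω α = 0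
  · rw [hm, add_zero] at hd
    have hq : α / ω ^ log ω α < ω := by
      rw [← lt_mul_iff_div_lt hpos, ← opow_add_one]
      exact lt_opow_of_log_lt one_lt_omega0 (Order.lt_add_one_iff.2 le_rfl)
    obtain ⟨k, hk⟩ := lt_omega0.1 hq
    rw [hk] at hd
    cases k with
    | zero => simp at hd; exact absurd hd.symm h
    | succ k => exact ⟨_, k, by rw [← hd]; push_cast; rfl⟩
  · have hlt : α % ω ^ log ω α < ω ^ log ω α := mod_lt _ hpos
    obtain ⟨γ, ξ, hx⟩ := ih _ (hlt.trans_le (opow_log_le_self _ h)) hm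
    have hγ : γ ≤ log ω α := by
      rw [← opow_le_opow_iff_right one_lt_omega0]
      refine le_trans ?_ hlt.le
      rw [hx]
      exact le_mul_left _ (Order.lt_add_one_iff.2 zero_le)
    obtain ⟨η, hη⟩ := opow_dvd_opow ω hγ
    refine ⟨γ, η * (α / ω ^ log ω α) + ξ, ?_⟩
    rw [add_assoc, mul_add, ← hx, ← mul_assoc, ← hη, hd]

theorem not_isSuccPrelimit_add_one (ξ : Ordinal.{0}) : ¬ Order.IsSuccPrelimit (ξ + 1) := by
  rw [← Order.succ_eq_add_one]
  exact Order.not_isSuccPrelimit_succ ξ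

/-- The supremum used in `fundSeq` to recover the last exponent has the intended value; the set
is bounded because `ω` divides no successor. -/
theorem sSup_exponents (γ ξ : Ordinal.{0}) :
    sSup {c : Ordinal.{0} | ω ^ c ∣ ω ^ γ * (ξ + 1)} = γ := by
  have : {c : Ordinal.{0} | ω ^ c ∣ ω ^ γ * (ξ + 1)} = Set.Iic γ := by
    ext c
    simp only [Set.mem_ofPred_eq, Set.mem_Iic]
    constructor
    · intro hc
      by_contra! hlt
      have h1 : ω ^ (γ + 1) ∣ ω ^ γ * (ξ + 1) :=
        (opow_dvd_opow ω (Order.add_one_le_of_lt hlt)).trans hc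
      obtain ⟨q, hq⟩ := h1
      rw [opow_add_one, mul_assoc] at hq
      have h2 := mul_left_cancel₀ (opow_ne_zero _ omega0_ne_zero) hq
      exact not_isSuccPrelimit_add_one ξ (isSuccPrelimit_iff_omega0_dvd.2 ⟨q, h2⟩)
    · intro hc
      exact (opow_dvd_opow ω hc).trans (dvd_mul_right _ _)
  rw [this, csSup_Iic]

theorem choose_add_one {β : Ordinal.{0}} (hs : ∃ β', β + 1 = β' + 1) :
    Classical.choose hs = β := by
  have h := Classical.choose_spec hs
  generalize Classical.choose hs = γ at h ⊢
  rw [← Order.succ_eq_add_one, ← Order.succ_eq_add_one] at h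
  exact (Order.succ_injective h).symm

theorem fundSeq_zero (n : ℕ) : fundSeq 0 n = 0 := by
  rw [fundSeq]; simp

theorem fundSeq_add_one (β : Ordinal.{0}) (n : ℕ) : fundSeq (β + 1) n = β := by
  have hs : ∃ β', β + 1 = β' + 1 := ⟨β, rfl⟩
  rw [fundSeq, dif_neg (by simp), dif_pos hs, choose_add_one hs]

theorem not_exists_add_one {α : Ordinal.{0}} (h : Order.IsSuccPrelimit α) :
    ¬ ∃ β, α = β + 1 := by
  rintro ⟨β, rfl⟩
  exact not_isSuccPrelimit_add_one β h

theorem isSuccPrelimit_nf {γ : Ordinal.{0}} (hγ : γ ≠ 0) (ξ : Ordinal.{0}) :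
    Order.IsSuccPrelimit (ω ^ γ * ξ) := by
  rw [isSuccPrelimit_iff_omega0_dvd]
  refine Dvd.dvd.mul_right ?_ _
  have := opow_dvd_opow ω (Order.one_le_iff_ne_zero.2 hγ)
  rwa [opow_one] at this

theorem nf_ne_zero (γ ξ : Ordinal.{0}) : ω ^ γ * (ξ + 1) ≠ 0 :=
  mul_ne_zero (opow_ne_zero _ omega0_ne_zero) (by simp)

theorem fundSeq_nf_succ (δ ξ : Ordinal.{0}) (n : ℕ) :
    fundSeq (ω ^ (δ + 1) * (ξ + 1)) n = ω ^ (δ + 1) * ξ + ω ^ δ * ((n : Ordinal) + 1) := by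
  rw [fundSeq, dif_neg (nf_ne_zero _ _),
    dif_neg (not_exists_add_one (isSuccPrelimit_nf (by simp) _))]
  have hs : ∃ δ', δ + 1 = δ' + 1 := ⟨δ, rfl⟩
  simp only [sSup_exponents]
  rw [dif_pos hs, choose_add_one hs, mul_div_cancel _ (opow_ne_zero _ omega0_ne_zero), pred_add_one]

theorem fundSeq_nf_limit {γ : Ordinal.{0}} (hγ : Order.IsSuccLimit γ) (hlt : γ < ω ^ γ)
    (ξ : Ordinal.{0}) (n : ℕ) :
    fundSeq (ω ^ γ * (ξ + 1)) n = ω ^ γ * ξ + ω ^ (fundSeq γ n) := by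
  have h0 : γ ≠ 0 := (isSuccLimit_iff.1 hγ).1
  have hle : γ < ω ^ γ * (ξ + 1) :=
    hlt.trans_le (le_mul_left _ (Order.lt_add_one_iff.2 zero_le))
  rw [fundSeq, dif_neg (nf_ne_zero _ _),
    dif_neg (not_exists_add_one (isSuccPrelimit_nf h0 _))]
  simp only [sSup_exponents]
  rw [dif_neg (not_exists_add_one (isSuccLimit_iff.1 hγ).2), dif_pos hle,
    mul_div_cancel _ (opow_ne_zero _ omega0_ne_zero), pred_add_one]

theorem fundSeq_opow_limit {γ : Ordinal.{0}} (hγ : Order.IsSuccLimit γ) (hlt : γ < ω ^ γ)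
    (n : ℕ) : fundSeq (ω ^ γ) n = ω ^ (fundSeq γ n) := by
  simpa using fundSeq_nf_limit hγ hlt 0 n

theorem fundSeq_opow_add_one (δ : Ordinal.{0}) (n : ℕ) :
    fundSeq (ω ^ (δ + 1)) n = ω ^ δ * ((n : Ordinal) + 1) := by
  simpa using fundSeq_nf_succ δ 0 n

theorem fundSeq_one (n : ℕ) : fundSeq 1 n = 0 := by
  simpa using fundSeq_add_one 0 n

theorem zero_or_add_one_or_limit (γ : Ordinal.{0}) :
    γ = 0 ∨ (∃ δ, γ = δ + 1) ∨ Order.IsSuccLimit γ := by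
  rcases zero_or_succ_or_isSuccLimit γ with h | ⟨δ, h⟩ | h
  · exact Or.inl h
  · exact Or.inr (Or.inl ⟨δ, by rw [← h, Order.succ_eq_add_one]⟩)
  · exact Or.inr (Or.inr h)

/-- The fundamental sequence acts only on the last term of the Cantor normal form. -/
theorem fundSeq_nf {γ : Ordinal.{0}} (hlt : γ < ω ^ γ) (ξ : Ordinal.{0}) (n : ℕ) :
    fundSeq (ω ^ γ * (ξ + 1)) n = ω ^ γ * ξ + fundSeq (ω ^ γ) n := by
  rcases zero_or_add_one_or_limit γ with rfl | ⟨δ, rfl⟩ | h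
  · simp [fundSeq_add_one, fundSeq_one]
  · rw [fundSeq_nf_succ, fundSeq_opow_add_one]
  · rw [fundSeq_nf_limit h hlt, fundSeq_opow_limit h hlt]

/-! ### The ordinal `ε₀` -/

theorem omega_opow_eps0 : ω ^ eps0 = eps0 :=
  nfp_fp (isNormal_opow one_lt_omega0) 0

theorem opow_lt_eps0 {α : Ordinal.{0}} (h : α < eps0) : ω ^ α < eps0 := by
  rw [← omega_opow_eps0]
  exact (opow_lt_opow_iff_right one_lt_omega0).2 h

/-- Below `ε₀` no exponent is a fixed point of `ω ^ ·`, so the junk branches of `fundSeq` and of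
the hierarchies are never reached. -/
theorem lt_opow_of_lt_eps0 {γ : Ordinal.{0}} (h : γ < eps0) : γ < ω ^ γ := by
  by_contra! hle
  exact h.not_ge (nfp_le_fp (isNormal_opow one_lt_omega0).monotone zero_le hle)

theorem add_lt_eps0 {α β : Ordinal.{0}} (ha : α < eps0) (hb : β < eps0) : α + β < eps0 := by
  have := isPrincipal_add_omega0_opow eps0
  rw [omega_opow_eps0] at this
  exact this ha hb

theorem zero_lt_eps0 : 0 < eps0 := by
  rw [← omega_opow_eps0]
  exact opow_pos _ omega0_pos

theorem tower_lt_eps0 (m : ℕ) : omegaTower m 1 < eps0 := by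
  induction m with
  | zero => simpa [omegaTower] using opow_lt_eps0 zero_lt_eps0
  | succ m ih => exact opow_lt_eps0 ih

theorem exponent_le_nf (γ ξ : Ordinal.{0}) : γ ≤ ω ^ γ * (ξ + 1) :=
  (right_le_opow γ one_lt_omega0).trans (le_mul_left _ (Order.lt_add_one_iff.2 zero_le))

theorem fundSeq_lt {α : Ordinal.{0}} (h : α < eps0) (h0 : α ≠ 0) (n : ℕ) : fundSeq α n < α := by
  induction α using WellFoundedLT.induction with
  | ind α ih =>
  obtain ⟨γ, ξ, rfl⟩ := exists_nf α h0
  have hγ : γ < eps0 := (exponent_le_nf γ ξ).trans_lt h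
  have hlt := lt_opow_of_lt_eps0 hγ
  rw [fundSeq_nf hlt, mul_add, mul_one]
  refine add_lt_add_right ?_ _
  rcases zero_or_add_one_or_limit γ with rfl | ⟨δ, rfl⟩ | hl
  · simp [fundSeq_one]
  · rw [fundSeq_opow_add_one]
    refine opow_mul_lt_opow ?_ (Order.lt_add_one_iff.2 le_rfl)
    exact_mod_cast natCast_lt_omega0 (n + 1)
  · rw [fundSeq_opow_limit hl hlt, opow_lt_opow_iff_right one_lt_omega0]
    exact ih γ (hlt.trans_le (le_mul_left _ (Order.lt_add_one_iff.2 zero_le))) hγ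
      (isSuccLimit_iff.1 hl).1

theorem fundSeq_le {α : Ordinal.{0}} (h : α < eps0) (n : ℕ) : fundSeq α n ≤ α := by
  by_cases h0 : α = 0
  · simp [h0, fundSeq_zero]
  · exact (fundSeq_lt h h0 n).le

/-- If no term of `α` is absorbed, prefixing a summand commutes with fundamental sequences. -/
theorem fundSeq_add {ρ η α : Ordinal.{0}} (h : α < eps0) (h0 : α ≠ 0) (hα : α ≤ ω ^ ρ) (n : ℕ) :
    fundSeq (ω ^ ρ * η + α) n = ω ^ ρ * η + fundSeq α n := by
  obtain ⟨γ, ξ, rfl⟩ := exists_nf α h0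
  have hlt := lt_opow_of_lt_eps0 ((exponent_le_nf γ ξ).trans_lt h)
  have hγ : γ ≤ ρ := by
    rw [← opow_le_opow_iff_right one_lt_omega0]
    exact (le_mul_left _ (Order.lt_add_one_iff.2 zero_le)).trans hα
  obtain ⟨κ, hκ⟩ := opow_dvd_opow ω hγ
  rw [hκ, mul_assoc, ← mul_add, ← add_assoc, fundSeq_nf hlt, fundSeq_nf hlt, mul_add, add_assoc]

/-! ### The step-down relation -/

theorem stepDown_fundSeq (n : ℕ) (α : Ordinal.{0}) : stepDown n α (fundSeq α n) :=
  Relation.ReflTransGen.single rfl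

theorem stepDown.refl (n : ℕ) (α : Ordinal.{0}) : stepDown n α α :=
  Relation.ReflTransGen.refl

theorem stepDown.trans {n : ℕ} {α β γ : Ordinal.{0}} (h : stepDown n α β) (h' : stepDown n β γ) :
    stepDown n α γ :=
  Relation.ReflTransGen.trans h h'

theorem stepDown_zero (n : ℕ) {α : Ordinal.{0}} (h : α < eps0) : stepDown n α 0 := by
  induction α using WellFoundedLT.induction with
  | ind α ih =>
  by_cases h0 : α = 0
  · rw [h0]; exact stepDown.refl _ _
  · have hlt := fundSeq_lt h h0 n
    exact (stepDown_fundSeq n α).trans (ih _ hlt (hlt.trans h))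

/-- Stepping down may be done behind a prefix that is a multiple of `ω ^ ρ`, as long as `ω ^ ρ`
bounds the starting point: no ordinal on the way is large enough to absorb part of the prefix. -/
theorem stepDown.add {n : ℕ} {ρ η α α' : Ordinal.{0}} (h : stepDown n α α') (hε : α < eps0)
    (hα : α ≤ ω ^ ρ) : stepDown n (ω ^ ρ * η + α) (ω ^ ρ * η + α') := by
  induction h using Relation.ReflTransGen.head_induction_on with
  | refl => exact stepDown.refl _ _
  | @head a c h _ ih =>
    subst h
    have hle := fundSeq_le hε n
    have ih' := ih (hle.trans_lt hε) (hle.trans hα)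
    by_cases h0 : a = 0
    · subst h0; rwa [fundSeq_zero] at ih'
    · refine stepDown.trans ?_ ih'
      rw [← fundSeq_add hε h0 hα]
      exact stepDown_fundSeq n _

theorem stepDown_mul_succ (n : ℕ) {δ : Ordinal.{0}} (h : δ < eps0) (η : Ordinal.{0}) :
    stepDown n (ω ^ δ * (η + 1)) (ω ^ δ * η) := by
  have := (stepDown_zero n (opow_lt_eps0 h)).add (η := η) (opow_lt_eps0 h) le_rfl
  rwa [add_zero, ← mul_add_one] at this

theorem stepDown_mul_nat (n k : ℕ) {δ : Ordinal.{0}} (h : δ < eps0) :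
    stepDown n (ω ^ δ * ((k : Ordinal) + 1)) (ω ^ δ) := by
  induction k with
  | zero => simpa using stepDown.refl n (ω ^ δ)
  | succ k ih =>
    refine (stepDown_mul_succ n h _).trans ?_
    push_cast
    exact ih

/-- Exponentiation preserves stepping down: at a successor exponent `δ + 1` one step leads to
`ω ^ δ * (n + 1)`, and the surplus copies of `ω ^ δ` are then removed one after another. -/
theorem stepDown.opow {n : ℕ} {γ γ' : Ordinal.{0}} (h : stepDown n γ γ') (hε : γ < eps0) :
    stepDown n (ω ^ γ) (ω ^ γ') := by
  induction h using Relation.ReflTransGen.head_induction_on with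
  | refl => exact stepDown.refl _ _
  | @head a c h _ ih =>
    subst h
    have ih' := ih ((fundSeq_le hε n).trans_lt hε)
    refine stepDown.trans ?_ ih'
    rcases zero_or_add_one_or_limit a with rfl | ⟨δ, rfl⟩ | hl
    · rw [fundSeq_zero]; exact stepDown.refl _ _
    · have h1 := stepDown_fundSeq n (ω ^ (δ + 1))
      rw [fundSeq_opow_add_one] at h1
      rw [fundSeq_add_one]
      exact h1.trans (stepDown_mul_nat n n ((Order.lt_add_one_iff.2 le_rfl).trans hε))
    · rw [← fundSeq_opow_limit hl (lt_opow_of_lt_eps0 hε)]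
      exact stepDown_fundSeq n _

/-- The Bachmann property: consecutive members of a fundamental sequence are linked by the
step-down relation with any parameter. -/
theorem stepDown_fundSeq_succ (n x : ℕ) {α : Ordinal.{0}} (h : α < eps0) :
    stepDown n (fundSeq α (x + 1)) (fundSeq α x) := by
  induction α using WellFoundedLT.induction with
  | ind α ih =>
  by_cases h0 : α = 0
  · simp only [h0, fundSeq_zero]; exact stepDown.refl _ _
  have hle := fundSeq_le h (x + 1)
  obtain ⟨γ, ξ, rfl⟩ := exists_nf α h0
  have hγ : γ < eps0 := (exponent_le_nf γ ξ).trans_lt h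
  have hlt := lt_opow_of_lt_eps0 hγ
  rw [fundSeq_nf hlt, fundSeq_nf hlt]
  have hωε := opow_lt_eps0 hγ
  have hle' := fundSeq_le hωε (x + 1)
  refine stepDown.add ?_ (hle'.trans_lt hωε) hle'
  rcases zero_or_add_one_or_limit γ with rfl | ⟨δ, rfl⟩ | hl
  · simp only [opow_zero, fundSeq_one]; exact stepDown.refl _ _
  · rw [fundSeq_opow_add_one, fundSeq_opow_add_one]
    push_cast
    exact stepDown_mul_succ n ((Order.lt_add_one_iff.2 le_rfl).trans hγ) _
  · rw [fundSeq_opow_limit hl hlt, fundSeq_opow_limit hl hlt]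
    exact (ih γ (hlt.trans_le (le_mul_left _ (Order.lt_add_one_iff.2 zero_le))) hγ).opow
      ((fundSeq_le hγ _).trans_lt hγ)

theorem stepDown_tower (n m : ℕ) : stepDown n (omegaTower (m + 1) 1) (omegaTower m 1) := by
  induction m with
  | zero =>
    have h1 : (1 : Ordinal.{0}) < eps0 := tower_lt_eps0 0
    simpa [omegaTower] using (stepDown_zero n h1).opow h1
  | succ m ih => exact ih.opow (tower_lt_eps0 (m + 1))

theorem stepDown_tower_of_le (n : ℕ) {k m : ℕ} (h : k ≤ m) :
    stepDown n (omegaTower m 1) (omegaTower k 1) := by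
  induction m, h using Nat.le_induction with
  | base => exact stepDown.refl _ _
  | succ m _ ih => exact (stepDown_tower n m).trans ih

/-! ### The fast-growing hierarchy -/

theorem fgh_zero (x : ℕ) : fgh 0 x = x + 1 := by
  rw [fgh]; simp

theorem fgh_add_one (β : Ordinal.{0}) (x : ℕ) : fgh (β + 1) x = (fgh β)^[x + 1] x := by
  have hs : ∃ β', β + 1 = β' + 1 := ⟨β, rfl⟩
  rw [fgh, dif_neg (by simp), dif_pos hs, choose_add_one hs]

theorem fgh_limit {α : Ordinal.{0}} (hl : Order.IsSuccLimit α) (h : α < eps0) (x : ℕ) :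
    fgh α x = fgh (fundSeq α x) x := by
  have h0 := (isSuccLimit_iff.1 hl).1
  rw [fgh, dif_neg h0, dif_neg (not_exists_add_one (isSuccLimit_iff.1 hl).2)]
  simp only [dif_pos (fundSeq_lt h h0 x)]

theorem slowF_zero : slowF 0 = slowFeps0 := by
  rw [slowF]; simp

theorem slowF_add_one (β : Ordinal.{0}) (x : ℕ) : slowF (β + 1) x = (slowF β)^[x + 1] x := by
  have hs : ∃ β', β + 1 = β' + 1 := ⟨β, rfl⟩
  rw [slowF, dif_neg (by simp), dif_pos hs, choose_add_one hs]

theorem slowF_limit {α : Ordinal.{0}} (hl : Order.IsSuccLimit α) (h : α < eps0) (x : ℕ) :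
    slowF α x = slowF (fundSeq α x) x := by
  have h0 := (isSuccLimit_iff.1 hl).1
  rw [slowF, dif_neg h0, dif_neg (not_exists_add_one (isSuccLimit_iff.1 hl).2)]
  simp only [dif_pos (fundSeq_lt h h0 x)]

theorem le_iterate_of_lt {f : ℕ → ℕ} (hf : ∀ x, x < f x) (k x : ℕ) : x + k ≤ f^[k] x := by
  induction k with
  | zero => simp
  | succ k ih =>
    rw [Function.iterate_succ_apply']
    have := hf (f^[k] x)
    omega

theorem lt_fgh {α : Ordinal.{0}} (h : α < eps0) (x : ℕ) : x < fgh α x := by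
  induction α using WellFoundedLT.induction generalizing x with
  | ind α ih =>
  rcases zero_or_add_one_or_limit α with rfl | ⟨δ, rfl⟩ | hl
  · simp [fgh_zero]
  · have hδ : δ < δ + 1 := Order.lt_add_one_iff.2 le_rfl
    rw [fgh_add_one]
    have := le_iterate_of_lt (ih δ hδ (hδ.trans h)) (x + 1) x
    omega
  · rw [fgh_limit hl h]
    have hlt := fundSeq_lt h (isSuccLimit_iff.1 hl).1 x
    exact ih _ hlt (hlt.trans h) x

theorem fgh_fundSeq_le {α : Ordinal.{0}} (h : α < eps0) (x : ℕ) :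
    fgh (fundSeq α x) x ≤ fgh α x := by
  rcases zero_or_add_one_or_limit α with rfl | ⟨δ, rfl⟩ | hl
  · rw [fundSeq_zero]
  · have hδ : δ < δ + 1 := Order.lt_add_one_iff.2 le_rfl
    rw [fundSeq_add_one, fgh_add_one, Function.iterate_succ_apply]
    exact (Nat.le_add_right _ _).trans (le_iterate_of_lt (lt_fgh (hδ.trans h)) x _)
  · rw [fgh_limit hl h]

theorem fgh_le_of_stepDown {x : ℕ} {α β : Ordinal.{0}} (hs : stepDown x α β) (h : α < eps0) :
    fgh β x ≤ fgh α x := by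
  induction hs using Relation.ReflTransGen.head_induction_on with
  | refl => exact le_rfl
  | head hs _ ih =>
    subst hs
    exact (ih ((fundSeq_le h x).trans_lt h)).trans (fgh_fundSeq_le h x)

theorem fgh_monotone {α : Ordinal.{0}} (h : α < eps0) : Monotone (fgh α) := by
  induction α using WellFoundedLT.induction with
  | ind α ih =>
  refine monotone_nat_of_le_succ fun x => ?_
  rcases zero_or_add_one_or_limit α with rfl | ⟨δ, rfl⟩ | hl
  · simp [fgh_zero]
  · have hδ : δ < δ + 1 := Order.lt_add_one_iff.2 le_rfl
    rw [fgh_add_one, fgh_add_one, Function.iterate_succ_apply' _ (x + 1)]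
    exact ((ih δ hδ (hδ.trans h)).iterate (x + 1) (Nat.le_succ x)).trans
      (lt_fgh (hδ.trans h) _).le
  · rw [fgh_limit hl h, fgh_limit hl h]
    have hlt := fundSeq_lt h (isSuccLimit_iff.1 hl).1
    exact (ih _ (hlt x) ((hlt x).trans h) (Nat.le_succ x)).trans
      (fgh_le_of_stepDown (stepDown_fundSeq_succ _ _ h) ((hlt _).trans h))

theorem Feps0_monotone : Monotone Feps0 := by
  refine monotone_nat_of_le_succ fun x => ?_
  exact (fgh_monotone (tower_lt_eps0 _) (Nat.le_succ x)).trans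
    (fgh_le_of_stepDown (stepDown_tower _ _) (tower_lt_eps0 _))

theorem Feps0Inv_lt {x m : ℕ} (hm : 0 < m) (h : x < Feps0 m) : Feps0Inv x < m := by
  have : Feps0Inv x ≤ m - 1 := by
    refine csSup_le ⟨0, Or.inr rfl⟩ ?_
    rintro z (⟨-, hz⟩ | rfl)
    · have := Feps0_monotone.reflect_lt (hz.trans_lt h)
      omega
    · exact Nat.zero_le _
  omega

/-! ### Comparing the two hierarchies -/

/-- A bound valid for a single application below a threshold `B` passes to iterates whose
majorant stays below `B`; only the majorant `f` has to be monotone. -/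
theorem iterate_le_of_le_below {f g : ℕ → ℕ} {B : ℕ} (hf : Monotone f) (hlt : ∀ x, x < f x)
    (hgf : ∀ x, f x ≤ B → g x ≤ f x) (l n : ℕ) (h : f^[l] n ≤ B) : g^[l] n ≤ f^[l] n := by
  induction l with
  | zero => exact le_rfl
  | succ l ih =>
    rw [Function.iterate_succ_apply'] at h ⊢
    rw [Function.iterate_succ_apply']
    have h1 := hf (ih ((hlt _).le.trans h))
    exact (hgf _ (h1.trans h)).trans h1

/-- The case of a single application, by induction on `α`. For `α = 0` the hypothesis forces
`n < F_{ε₀}(m)`, hence `F_{ε₀}⁻¹(n) + 1 ≤ m`, and the tower used by the slow function is reached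
from `ω_m` by stepping down. -/
theorem slowF_le {m : ℕ} (hm : 0 < m) {α : Ordinal.{0}} (hα : α ≤ omegaTower m 1) (n : ℕ)
    (h : fgh (omegaTower m 1 + α) n ≤ Feps0 m) : slowF α n ≤ fgh (omegaTower m 1 + α) n := by
  induction α using WellFoundedLT.induction generalizing n with
  | ind α ih =>
  have hT := tower_lt_eps0 m
  have hε : α < eps0 := hα.trans_lt hT
  rcases zero_or_add_one_or_limit α with rfl | ⟨δ, rfl⟩ | hl
  · rw [add_zero] at h ⊢
    rw [slowF_zero]
    exact fgh_le_of_stepDown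
      (stepDown_tower_of_le n (Feps0Inv_lt hm ((lt_fgh hT n).trans_le h))) hT
  · have hδ : δ < δ + 1 := Order.lt_add_one_iff.2 le_rfl
    have hs := add_lt_eps0 hT (hδ.trans hε)
    rw [← add_assoc, fgh_add_one] at h ⊢
    rw [slowF_add_one]
    exact iterate_le_of_le_below (fgh_monotone hs) (lt_fgh hs)
      (fun x hx => ih δ hδ (hδ.le.trans hα) x hx) _ _ h
  · have h0 := (isSuccLimit_iff.1 hl).1
    have hlt := fundSeq_lt hε h0 n
    -- Since `0 < m`, `ω_m` is a power `ω ^ ρ`, as required by `fundSeq_add`.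
    have key : fundSeq (omegaTower m 1 + α) n = omegaTower m 1 + fundSeq α n := by
      obtain ⟨k, rfl⟩ : ∃ k, m = k + 1 := ⟨m - 1, by omega⟩
      simpa [omegaTower] using fundSeq_add (ρ := omegaTower k 1) (η := 1) hε h0 hα n
    rw [fgh_limit (isSuccLimit_add _ hl) (add_lt_eps0 hT hε), key] at h ⊢
    rw [slowF_limit hl hε]
    exact ih _ hlt (hlt.le.trans hα) n h

/-- If `m > 0`, `α ≤ ω_m` and `(F_{ω_m+α})^[l](n) ≤ F_{ε₀}(m)`, then
`(F^⋄_{ε₀+α})^[l](n) ≤ (F_{ω_m+α})^[l](n)`. -/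
theorem stmt5 : ∀ (l m n : ℕ) (α : Ordinal.{0}), 0 < m → α ≤ omegaTower m 1 →
    (fgh (omegaTower m 1 + α))^[l] n ≤ Feps0 m →
    (slowF α)^[l] n ≤ (fgh (omegaTower m 1 + α))^[l] n := by
  intro l m n α hm hα h
  have hs := add_lt_eps0 (tower_lt_eps0 m) (hα.trans_lt (tower_lt_eps0 m))
  exact iterate_le_of_le_below (fgh_monotone hs) (lt_fgh hs) (fun x hx => slowF_le hm hα x hx) l n h

end
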